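/- arXiv:2412.15782 — 2 statements merged into one kernel-verified Lean document; each statement's English description precedes it below -/
import Mathlib

section
/- Let G = (V, E, x) be a finite connected rooted graph with conductances λ ∈ (0,∞)^E, let y, z ∈ V be two vertices, let Ḡ be the graph obtained from G by identifying the vertices y and z, and let λ̄ be the induced collection of conductances on Ḡ. Then for every vertex i ∈ V, Var^{IV-GFF}_{Ḡ,λ̄}[φ(i)] ≤ Var^{IV-GFF}_{G,λ}[φ(i)], and for every pair of vertices i,j ∈ V, Var^{IV-GFF}_{Ḡ,λ̄}[φ(i) − φ(j)] ≤ Var^{IV-GFF}_{G,λ}[φ(i) − φ(j)]. -/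
open scoped ENNReal

noncomputable section

/-- The graph on `V` whose edges are the pairs of distinct vertices carrying a positive
conductance. -/
def supportGraph {V : Type*} (c : V → V → ℝ) : SimpleGraph V :=
  SimpleGraph.fromRel (fun a b => 0 < c a b)

/-- Configurations of the integer-valued Gaussian free field on the rooted graph with
conductances `c` and root `x`: integer-valued height functions vanishing at the root and
(by convention) outside the connected component of the root. -/
def GffConfig {V : Type*} (c : V → V → ℝ) (x : V) : Type _ :=
  {φ : V → ℤ // φ x = 0 ∧ ∀ v : V, ¬ (supportGraph c).Reachable x v → φ v = 0}

/-- Boltzmann weight `exp(−∑_{ij∈E} λ_{ij}(φ(i)−φ(j))²)` of a configuration (each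
unordered pair is counted once, whence the factor `1/2` in the ordered sum). -/
def gffWeight {V : Type*} [Fintype V] (c : V → V → ℝ) (φ : V → ℤ) : ℝ :=
  Real.exp (-((1 : ℝ) / 2 * ∑ i : V, ∑ j : V, c i j * ((φ i - φ j : ℤ) : ℝ) ^ 2))

/-- Partition function of the integer-valued Gaussian free field. -/
def gffZ {V : Type*} [Fintype V] (c : V → V → ℝ) (x : V) : ℝ :=
  ∑' φ : GffConfig c x, gffWeight c φ.val

/-- Variance of an observable `f` under the integer-valued Gaussian free field
(real-valued formula, meaningful on the connected component of the root). -/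
def gffRVar {V : Type*} [Fintype V] (c : V → V → ℝ) (x : V) (f : (V → ℤ) → ℝ) : ℝ :=
  (∑' φ : GffConfig c x, f φ.val ^ 2 * gffWeight c φ.val) / gffZ c x
    - ((∑' φ : GffConfig c x, f φ.val * gffWeight c φ.val) / gffZ c x) ^ 2

open scoped Classical in
/-- Variance of the height `φ(i)` under the integer-valued Gaussian free field, set to
`∞` when `i` is not connected to the root. -/
def gffVar1 {V : Type*} [Fintype V] (c : V → V → ℝ) (x : V) (i : V) : ℝ≥0∞ :=
  if (supportGraph c).Reachable x i then
    ENNReal.ofReal (gffRVar c x fun φ => ((φ i : ℤ) : ℝ))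
  else ⊤

open scoped Classical in
/-- Variance of the height difference `φ(i) − φ(j)` under the integer-valued Gaussian
free field, set to `∞` when `i` or `j` is not connected to the root. -/
def gffVar2 {V : Type*} [Fintype V] (c : V → V → ℝ) (x : V) (i j : V) : ℝ≥0∞ :=
  if (supportGraph c).Reachable x i ∧ (supportGraph c).Reachable x j then
    ENNReal.ofReal (gffRVar c x fun φ => ((φ i : ℤ) : ℝ) - ((φ j : ℤ) : ℝ))
  else ⊤

end

/-- The map identifying the vertex `z` with the vertex `y`. -/
def mergeMap {V : Type*} [DecidableEq V] (y z : V) : V → V :=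
  fun v => if v = z then y else v

/-- The conductances induced on the graph obtained by identifying `y` and `z`
(parallel edges have their conductances added). -/
noncomputable def mergeCond {V : Type*} [Fintype V] [DecidableEq V]
    (c : V → V → ℝ) (y z : V) : V → V → ℝ :=
  fun a b => ∑ i : V, ∑ j : V, if mergeMap y z i = a ∧ mergeMap y z j = b then c i j else 0

/-!
The field with identified vertices is the original field conditioned to lie in a subgroup of the
group of configurations, so the theorem is an instance of a monotonicity property of discrete
Gaussians: if `q` satisfies the parallelogram law on a torsion-free abelian group `L`, `l` is
additive and `M ≤ L`, then the second moment of `l` under the weights `exp (-q)` is at most as large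
on `M` as on `L`. With `g = l * exp (-q / 2)` the parallelogram law gives
`g (a - m) * g (a + m) = (l a ^ 2 - l m ^ 2) * exp (-q a) * exp (-q m)`, and the sum of the
left-hand side over `a ∈ L` and `m ∈ M` equals the sum over the cosets of `2M` in `L` of the squared
sum of `g` over the coset, hence is nonnegative.
-/

open Real
open scoped Pointwise

section Autocorrelation

variable {L M : Type*} [AddGroup L] {g : L → ℝ}

lemma summable_mul_translate (hg : Summable g) {j : M → L} (hj : Function.Injective j) :
    Summable fun p : L × M => g p.1 * g (p.1 + j p.2) := by
  have hinj : Function.Injective fun p : L × M => (p.1, p.1 + j p.2) := by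
    rintro ⟨a, m⟩ ⟨b, n⟩ h
    obtain ⟨rfl, h⟩ := Prod.mk.inj h
    exact congrArg _ (hj (add_left_cancel h))
  exact (summable_mul_of_summable_norm hg.norm hg.norm).comp_injective hinj

lemma tsum_preimage_mk (N : AddSubgroup L) (g : L → ℝ) (a : L) :
    ∑' b : (QuotientAddGroup.mk ⁻¹' {(a : L ⧸ N)} : Set L), g b = ∑' n : N, g (a + n) := by
  have preimage_eq_coset : (QuotientAddGroup.mk ⁻¹' {(a : L ⧸ N)} : Set L) = a +ᵥ (N : Set L) :=
    QuotientAddGroup.eq_class_eq_leftCoset N a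
  rw [preimage_eq_coset]
  exact ((AddSubgroup.leftCosetEquivAddSubgroup a).symm.tsum_eq
    fun b : (a +ᵥ (N : Set L) : Set L) => g b).symm

lemma tsum_mul_tsum_coset_nonneg (hg : Summable g) (N : AddSubgroup L) :
    0 ≤ ∑' a, g a * ∑' n : N, g (a + n) := by
  let S : L ⧸ N → ℝ := fun k => ∑' b : (QuotientAddGroup.mk ⁻¹' {k} : Set L), g b
  have tsum_coset (a : L) : ∑' n : N, g (a + n) = S a := (tsum_preimage_mk N g a).symm
  have hsum : Summable fun a => g a * S a := by
    simpa only [tsum_mul_left, AddSubgroup.subtype_apply, tsum_coset] using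
      (summable_mul_translate hg N.subtype_injective).prod
  calc 0 ≤ ∑' k, S k * S k := tsum_nonneg fun k => mul_self_nonneg (S k)
    _ = ∑' k, ∑' b : (QuotientAddGroup.mk ⁻¹' {k} : Set L), g b * S (b : L) := by
      refine tsum_congr fun k => ?_
      rw [← tsum_mul_right]
      exact tsum_congr fun b => congrArg (g b * S ·) b.2.symm
    _ = ∑' a, g a * S a := (hsum.hasSum.tsum_fiberwise QuotientAddGroup.mk).tsum_eq
    _ = ∑' a, g a * ∑' n : N, g (a + n) := by simp only [tsum_coset]

lemma tsum_mul_translate_nonneg [AddGroup M] (hg : Summable g) {j : M →+ L}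
    (hj : Function.Injective j) : 0 ≤ ∑' p : L × M, g p.1 * g (p.1 + j p.2) := by
  have tsum_range (a : L) : ∑' m, g (a + j m) = ∑' n : j.range, g (a + n) :=
    (AddMonoidHom.ofInjective hj).toEquiv.tsum_eq fun n : j.range => g (a + n)
  rw [(summable_mul_translate hg hj).tsum_prod]
  simp only [tsum_mul_left, tsum_range]
  exact tsum_mul_tsum_coset_nonneg hg j.range

end Autocorrelation

section DiscreteGaussian

variable {L M : Type*}

/-- The second moment of the observable `l` under the discrete Gaussian on `L` with energy `q`, that
is, under the probability weights proportional to `exp (-q a)`. -/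
noncomputable def discreteGaussianSecondMoment (q l : L → ℝ) : ℝ :=
  (∑' a, l a ^ 2 * exp (-q a)) / ∑' a, exp (-q a)

lemma summable_sq_mul_exp_neg {q l : L → ℝ} (h : Summable fun a => l a * exp (-q a / 2)) :
    Summable fun a => l a ^ 2 * exp (-q a) := by
  have hdiag : Function.Injective fun a : L => (a, a) := fun _ _ h => congrArg Prod.fst h
  refine ((summable_mul_of_summable_norm h.norm h.norm).comp_injective hdiag).congr fun a => ?_
  have exp_half : exp (-q a) = exp (-q a / 2) * exp (-q a / 2) := by rw [← exp_add, add_halves]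
  simp only [Function.comp_apply, exp_half]
  ring

variable [AddCommGroup L] [AddCommGroup M] {q : L → ℝ}

lemma mul_exp_sub_mul_exp_add (hq : ∀ a b, q (a + b) + q (a - b) = 2 * (q a + q b)) (l : L →+ ℝ)
    (a b : L) :
    l (a - b) * exp (-q (a - b) / 2) * (l (a + b) * exp (-q (a + b) / 2)) =
      (l a ^ 2 - l b ^ 2) * (exp (-q a) * exp (-q b)) := by
  have hexp : exp (-q (a - b) / 2) * exp (-q (a + b) / 2) = exp (-q a) * exp (-q b) := by
    rw [← exp_add, ← exp_add]
    congr 1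
    linarith [hq a b]
  rw [map_sub, map_add, ← hexp]
  ring

variable [IsAddTorsionFree L] {l : L →+ ℝ} {ι : M →+ L}

lemma tsum_sq_sub_sq_mul_exp_nonneg (hq : ∀ a b, q (a + b) + q (a - b) = 2 * (q a + q b))
    (hι : Function.Injective ι) (hl : Summable fun a => l a * exp (-q a / 2)) :
    0 ≤ ∑' p : L × M, (l p.1 ^ 2 - l (ι p.2) ^ 2) * (exp (-q p.1) * exp (-q (ι p.2))) := by
  let shear : L × M ≃ L × M :=
    { toFun := fun p => (p.1 - ι p.2, p.2)
      invFun := fun p => (p.1 + ι p.2, p.2)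
      left_inv := fun p => by simp
      right_inv := fun p => by simp }
  have two_smul_injective : Function.Injective ⇑(2 • ι) :=
    (IsAddTorsionFree.nsmul_right_injective two_ne_zero).comp hι
  refine (tsum_mul_translate_nonneg hl two_smul_injective).trans_eq ?_
  rw [← shear.tsum_eq]
  refine tsum_congr fun p => ?_
  have sub_add_two_smul : p.1 - ι p.2 + (2 • ι) p.2 = p.1 + ι p.2 := by
    rw [AddMonoidHom.smul_apply]
    abel
  simp only [shear, Equiv.coe_fn_mk, sub_add_two_smul, mul_exp_sub_mul_exp_add hq]

theorem discreteGaussianSecondMoment_comp_le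
    (hq : ∀ a b, q (a + b) + q (a - b) = 2 * (q a + q b)) (hι : Function.Injective ι)
    (hexp : Summable fun a => exp (-q a)) (hl : Summable fun a => l a * exp (-q a / 2)) :
    discreteGaussianSecondMoment (q ∘ ι) (l ∘ ι) ≤ discreteGaussianSecondMoment q l := by
  have hsq : Summable fun a => l a ^ 2 * exp (-q a) := summable_sq_mul_exp_neg hl
  have hexpM : Summable fun m => exp (-q (ι m)) := hexp.comp_injective hι
  have hsqM : Summable fun m => l (ι m) ^ 2 * exp (-q (ι m)) := hsq.comp_injective hι
  have hL : Summable fun p : L × M => l p.1 ^ 2 * exp (-q p.1) * exp (-q (ι p.2)) :=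
    hsq.mul_of_nonneg hexpM (fun _ => by positivity) (fun _ => by positivity)
  have hM : Summable fun p : L × M => exp (-q p.1) * (l (ι p.2) ^ 2 * exp (-q (ι p.2))) :=
    hexp.mul_of_nonneg hsqM (fun _ => by positivity) (fun _ => by positivity)
  have cross_multiplied : (∑' m, l (ι m) ^ 2 * exp (-q (ι m))) * ∑' a, exp (-q a) ≤
      (∑' a, l a ^ 2 * exp (-q a)) * ∑' m, exp (-q (ι m)) := by
    rw [mul_comm, hexp.tsum_mul_tsum hsqM hM, hsq.tsum_mul_tsum hexpM hL, ← sub_nonneg,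
      ← hL.tsum_sub hM]
    refine (tsum_sq_sub_sq_mul_exp_nonneg hq hι hl).trans_eq (tsum_congr fun p => ?_)
    ring
  exact (div_le_div_iff₀ (hexpM.tsum_pos (fun _ => (exp_pos _).le) 0 (exp_pos _))
    (hexp.tsum_pos (fun _ => (exp_pos _).le) 0 (exp_pos _))).mpr cross_multiplied

end DiscreteGaussian

section Summability

lemma summable_pi_prod {ι : Type*} [Fintype ι] {κ : ι → Type*} {f : ∀ i, κ i → ℝ}
    (hf : ∀ i, Summable (f i)) (hf_nonneg : ∀ i k, 0 ≤ f i k) :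
    Summable fun φ : ∀ i, κ i => ∏ i, f i (φ i) := by
  classical
  refine summable_of_sum_le (c := ∏ i, ∑' k, f i k)
    (fun φ => Finset.prod_nonneg fun i _ => hf_nonneg i _) fun s => ?_
  let box : ∀ i, Finset (κ i) := fun i => s.image (· i)
  have subset_box : s ⊆ Fintype.piFinset box := fun φ hφ =>
    Fintype.mem_piFinset.mpr fun i => Finset.mem_image_of_mem _ hφ
  calc ∑ φ ∈ s, ∏ i, f i (φ i)
      ≤ ∑ φ ∈ Fintype.piFinset box, ∏ i, f i (φ i) :=
        Finset.sum_le_sum_of_subset_of_nonneg subset_box fun φ _ _ =>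
          Finset.prod_nonneg fun i _ => hf_nonneg i _
    _ = ∏ i, ∑ k ∈ box i, f i k := (Finset.prod_univ_sum _ _).symm
    _ ≤ ∏ i, ∑' k, f i k := Finset.prod_le_prod
        (fun i _ => Finset.sum_nonneg fun k _ => hf_nonneg i k)
        (fun i _ => (hf i).sum_le_tsum _ fun k _ => hf_nonneg i k)

lemma summable_int_exp_neg_mul_sq {δ : ℝ} (hδ : 0 < δ) :
    Summable fun n : ℤ => exp (-(δ * n ^ 2)) := by
  refine (summable_pow_mul_jacobiTheta₂_term_bound 0 (div_pos hδ pi_pos) 0).congr fun n => ?_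
  rw [pow_zero, one_mul]
  congr 1
  field_simp
  ring

lemma summable_pi_exp_neg_mul_sum_sq {V : Type*} [Fintype V] {δ : ℝ} (hδ : 0 < δ) :
    Summable fun φ : V → ℤ => exp (-(δ * ∑ v, (φ v : ℝ) ^ 2)) := by
  simpa only [Finset.mul_sum, ← Finset.sum_neg_distrib, exp_sum] using
    summable_pi_prod (fun _ : V => summable_int_exp_neg_mul_sq hδ) fun _ _ => (exp_pos _).le

end Summability

section Energy

variable {V : Type*} [Fintype V] {c : V → V → ℝ}

/-- The energy `∑_{ij∈E} c_{ij}(φ(i)−φ(j))²` of a height function, so that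
`gffWeight c φ = exp (-gffEnergy c φ)`. -/
noncomputable def gffEnergy (c : V → V → ℝ) (φ : V → ℤ) : ℝ :=
  1 / 2 * ∑ i, ∑ j, c i j * ((φ i - φ j : ℤ) : ℝ) ^ 2

lemma gffEnergy_add_add_sub (c : V → V → ℝ) (φ ψ : V → ℤ) :
    gffEnergy c (φ + ψ) + gffEnergy c (φ - ψ) = 2 * (gffEnergy c φ + gffEnergy c ψ) := by
  simp only [gffEnergy, Finset.mul_sum, ← Finset.sum_add_distrib]
  refine Finset.sum_congr rfl fun i _ => Finset.sum_congr rfl fun j _ => ?_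
  simp only [Pi.add_apply, Pi.sub_apply]
  push_cast
  ring

lemma gffWeight_neg (c : V → V → ℝ) (φ : V → ℤ) : gffWeight c (-φ) = gffWeight c φ := by
  have sq_neg_sub (i j : V) : (((-φ) i - (-φ) j : ℤ) : ℝ) ^ 2 = ((φ i - φ j : ℤ) : ℝ) ^ 2 := by
    simp only [Pi.neg_apply]
    push_cast
    ring
  simp only [gffWeight, sq_neg_sub]

lemma gffEnergy_nonneg (hc : ∀ i j, 0 ≤ c i j) (φ : V → ℤ) : 0 ≤ gffEnergy c φ :=
  mul_nonneg one_half_pos.le <| Finset.sum_nonneg fun i _ => Finset.sum_nonneg fun j _ =>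
    mul_nonneg (hc i j) (sq_nonneg _)

lemma mul_sq_sub_le_two_mul_gffEnergy (hc : ∀ i j, 0 ≤ c i j) (φ : V → ℤ) (a b : V) :
    c a b * ((φ a : ℝ) - φ b) ^ 2 ≤ 2 * gffEnergy c φ := by
  have term_nonneg (i j : V) : 0 ≤ c i j * ((φ i - φ j : ℤ) : ℝ) ^ 2 :=
    mul_nonneg (hc i j) (sq_nonneg _)
  calc c a b * ((φ a : ℝ) - φ b) ^ 2 = c a b * ((φ a - φ b : ℤ) : ℝ) ^ 2 := by push_cast; rfl
    _ ≤ ∑ j, c a j * ((φ a - φ j : ℤ) : ℝ) ^ 2 :=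
      Finset.single_le_sum (fun j _ => term_nonneg a j) (Finset.mem_univ b)
    _ ≤ ∑ i, ∑ j, c i j * ((φ i - φ j : ℤ) : ℝ) ^ 2 :=
      Finset.single_le_sum (fun i _ => Finset.sum_nonneg fun j _ => term_nonneg i j)
        (Finset.mem_univ a)
    _ = 2 * gffEnergy c φ := by rw [gffEnergy]; ring

lemma exists_sq_sub_le_mul_gffEnergy_of_adj (hc : ∀ i j, 0 ≤ c i j) {a b : V}
    (hab : (supportGraph c).Adj a b) :
    ∃ C : ℝ, 0 ≤ C ∧ ∀ φ : V → ℤ, ((φ b : ℝ) - φ a) ^ 2 ≤ C * gffEnergy c φ := by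
  obtain ⟨-, hpos | hpos⟩ := (SimpleGraph.fromRel_adj _ _ _).mp hab
  · refine ⟨2 / c a b, by positivity, fun φ => ?_⟩
    rw [div_mul_eq_mul_div, le_div_iff₀' hpos, sub_sq_comm]
    exact mul_sq_sub_le_two_mul_gffEnergy hc φ a b
  · refine ⟨2 / c b a, by positivity, fun φ => ?_⟩
    rw [div_mul_eq_mul_div, le_div_iff₀' hpos]
    exact mul_sq_sub_le_two_mul_gffEnergy hc φ b a

lemma exists_sq_le_mul_gffEnergy_of_reachable (hc : ∀ i j, 0 ≤ c i j) {x v : V}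
    (hv : (supportGraph c).Reachable x v) :
    ∃ C : ℝ, 0 ≤ C ∧ ∀ φ : V → ℤ, φ x = 0 → (φ v : ℝ) ^ 2 ≤ C * gffEnergy c φ := by
  rw [SimpleGraph.reachable_iff_reflTransGen] at hv
  induction hv with
  | refl => exact ⟨0, le_rfl, fun φ hφ => by simp [hφ]⟩
  | @tail a b _ hab ih =>
    obtain ⟨C, hC, sq_le⟩ := ih
    obtain ⟨D, hD, sq_sub_le⟩ := exists_sq_sub_le_mul_gffEnergy_of_adj hc hab
    refine ⟨2 * (C + D), by positivity, fun φ hφ => ?_⟩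
    calc (φ b : ℝ) ^ 2 = ((φ a : ℝ) + (φ b - φ a)) ^ 2 := by ring
      _ ≤ 2 * ((φ a : ℝ) ^ 2 + (φ b - φ a) ^ 2) := add_sq_le
      _ ≤ 2 * (C * gffEnergy c φ + D * gffEnergy c φ) := by
        gcongr
        exacts [sq_le φ hφ, sq_sub_le φ]
      _ = 2 * (C + D) * gffEnergy c φ := by ring

end Energy

section RootedField

variable {V : Type*} {c : V → V → ℝ} {x : V}

/-- The configurations of the integer-valued Gaussian free field as a group of height functions;
as a type it is `GffConfig c x`. -/
def gffConfigSubgroup (c : V → V → ℝ) (x : V) : AddSubgroup (V → ℤ) where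
  carrier := {φ | φ x = 0 ∧ ∀ v, ¬ (supportGraph c).Reachable x v → φ v = 0}
  zero_mem' := ⟨rfl, fun _ _ => rfl⟩
  add_mem' := fun hφ hψ => ⟨by simp [hφ.1, hψ.1], fun v hv => by simp [hφ.2 v hv, hψ.2 v hv]⟩
  neg_mem' := fun hφ => ⟨by simp [hφ.1], fun v hv => by simp [hφ.2 v hv]⟩

variable [Fintype V]

lemma gffRVar_eq_discreteGaussianSecondMoment (c : V → V → ℝ) (x : V) (l : (V → ℤ) →+ ℝ) :
    gffRVar c x l = discreteGaussianSecondMoment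
      (fun φ : gffConfigSubgroup c x => gffEnergy c φ) (fun φ => l φ) := by
  have tsum_odd : ∑' φ : gffConfigSubgroup c x, l φ * gffWeight c φ = 0 := by
    rw [← self_eq_neg, ← tsum_neg, ← (Equiv.neg _).tsum_eq]
    simp only [Equiv.neg_apply, AddSubgroup.coe_neg, map_neg, gffWeight_neg, neg_mul]
  calc gffRVar c x l
      = (∑' φ : gffConfigSubgroup c x, l φ ^ 2 * gffWeight c φ) / gffZ c x
        - ((∑' φ : gffConfigSubgroup c x, l φ * gffWeight c φ) / gffZ c x) ^ 2 := rfl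
    _ = (∑' φ : gffConfigSubgroup c x, l φ ^ 2 * gffWeight c φ) / gffZ c x := by
      rw [tsum_odd, zero_div, zero_pow two_ne_zero, sub_zero]

lemma exists_sum_sq_le_mul_gffEnergy (hc : ∀ i j, 0 ≤ c i j) (x : V) :
    ∃ C : ℝ, 0 < C ∧ ∀ φ ∈ gffConfigSubgroup c x, ∑ v, (φ v : ℝ) ^ 2 ≤ C * gffEnergy c φ := by
  have sq_le (v : V) : ∃ C : ℝ, 0 ≤ C ∧
      ∀ φ ∈ gffConfigSubgroup c x, (φ v : ℝ) ^ 2 ≤ C * gffEnergy c φ := by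
    by_cases hv : (supportGraph c).Reachable x v
    · obtain ⟨C, hC, h⟩ := exists_sq_le_mul_gffEnergy_of_reachable hc hv
      exact ⟨C, hC, fun φ hφ => h φ hφ.1⟩
    · exact ⟨0, le_rfl, fun φ hφ => by simp [hφ.2 v hv]⟩
  choose C hC sq_le using sq_le
  refine ⟨∑ v, C v + 1, add_pos_of_nonneg_of_pos (Finset.sum_nonneg fun v _ => hC v) one_pos,
    fun φ hφ => ?_⟩
  calc ∑ v, (φ v : ℝ) ^ 2 ≤ ∑ v, C v * gffEnergy c φ := Finset.sum_le_sum fun v _ => sq_le v φ hφ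
    _ = (∑ v, C v) * gffEnergy c φ := (Finset.sum_mul _ _ _).symm
    _ ≤ (∑ v, C v + 1) * gffEnergy c φ :=
      mul_le_mul_of_nonneg_right (le_add_of_nonneg_right zero_le_one) (gffEnergy_nonneg hc φ)

lemma summable_exp_neg_mul_gffEnergy (hc : ∀ i j, 0 ≤ c i j) (x : V) {δ : ℝ} (hδ : 0 < δ) :
    Summable fun φ : gffConfigSubgroup c x => exp (-(δ * gffEnergy c φ)) := by
  obtain ⟨C, hC, sum_sq_le⟩ := exists_sum_sq_le_mul_gffEnergy hc x
  refine .of_nonneg_of_le (fun _ => (exp_pos _).le) (fun φ => ?_)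
    ((summable_pi_exp_neg_mul_sum_sq (div_pos hδ hC)).subtype (gffConfigSubgroup c x : Set (V → ℤ)))
  refine exp_le_exp.mpr (neg_le_neg ?_)
  calc δ / C * ∑ v, (φ.1 v : ℝ) ^ 2 ≤ δ / C * (C * gffEnergy c φ) := by
        gcongr
        exact sum_sq_le φ φ.2
    _ = δ * gffEnergy c φ := by field_simp

lemma exists_sq_addMonoidHom_le_mul_sum_sq (l : (V → ℤ) →+ ℝ) :
    ∃ K : ℝ, 0 ≤ K ∧ ∀ φ : V → ℤ, l φ ^ 2 ≤ K * ∑ v, (φ v : ℝ) ^ 2 := by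
  classical
  let w : V → ℝ := fun v => l fun u => if v = u then 1 else 0
  refine ⟨∑ v, w v ^ 2, Finset.sum_nonneg fun v _ => sq_nonneg _, fun φ => ?_⟩
  have apply_eq_sum : l φ = ∑ v, w v * φ v := by
    simpa only [zsmul_eq_mul, mul_comm, AddMonoidHom.coe_toIntLinearMap] using
      l.toIntLinearMap.pi_apply_eq_sum_univ φ
  rw [apply_eq_sum]
  exact Finset.sum_mul_sq_le_sq_mul_sq _ _ _

lemma summable_addMonoidHom_mul_exp_neg_gffEnergy (hc : ∀ i j, 0 ≤ c i j) (x : V)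
    (l : (V → ℤ) →+ ℝ) :
    Summable fun φ : gffConfigSubgroup c x => l φ * exp (-gffEnergy c φ / 2) := by
  obtain ⟨K, hK, sq_le⟩ := exists_sq_addMonoidHom_le_mul_sum_sq l
  obtain ⟨C, hC, sum_sq_le⟩ := exists_sum_sq_le_mul_gffEnergy hc x
  refine .of_norm_bounded ((summable_exp_neg_mul_gffEnergy hc x (δ := 1 / 4)
    (by norm_num)).mul_left (4 * (K * C) + 1)) fun φ => ?_
  set q := gffEnergy c φ
  have hq : 0 ≤ q := gffEnergy_nonneg hc φ
  have hl : l φ ^ 2 ≤ K * C * q := by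
    rw [mul_assoc]
    exact (sq_le φ).trans (mul_le_mul_of_nonneg_left (sum_sq_le φ φ.2) hK)
  have abs_le : |l φ| ≤ (4 * (K * C) + 1) * exp (q / 4) :=
    calc |l φ| ≤ l φ ^ 2 + 1 := by
          rw [← sq_abs]
          nlinarith [sq_nonneg (|l φ| - 1), abs_nonneg (l φ)]
      _ ≤ (4 * (K * C) + 1) * (q / 4 + 1) := by nlinarith [mul_nonneg hK hC.le]
      _ ≤ (4 * (K * C) + 1) * exp (q / 4) := by
        gcongr
        exact add_one_le_exp _
  calc ‖l φ * exp (-q / 2)‖ = |l φ| * exp (-q / 2) := by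
        rw [norm_mul, norm_eq_abs, norm_of_nonneg (exp_pos _).le]
    _ ≤ (4 * (K * C) + 1) * exp (q / 4) * exp (-q / 2) := by gcongr
    _ = (4 * (K * C) + 1) * exp (-(1 / 4 * q)) := by
      rw [mul_assoc, ← exp_add]
      ring_nf

end RootedField

section Identification

variable {V W : Type*} [Fintype V] [DecidableEq W] {c : V → V → ℝ}

/-- The conductances induced on `W` when every fibre of `f : V → W` is identified to a single vertex
(parallel edges have their conductances added); `mergeCond c y z` is the case
`f = mergeMap y z`. -/
def condMap (f : V → W) (c : V → V → ℝ) : W → W → ℝ :=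
  fun a b => ∑ i, ∑ j, if f i = a ∧ f j = b then c i j else 0

lemma le_condMap (hc : ∀ i j, 0 ≤ c i j) (f : V → W) (i j : V) :
    c i j ≤ condMap f c (f i) (f j) := by
  have term_nonneg (a b : V) : 0 ≤ if f a = f i ∧ f b = f j then c a b else 0 :=
    ite_nonneg (hc a b) le_rfl
  calc c i j = if f i = f i ∧ f j = f j then c i j else 0 := by simp
    _ ≤ ∑ b, if f i = f i ∧ f b = f j then c i b else 0 :=
      Finset.single_le_sum (fun b _ => term_nonneg i b) (Finset.mem_univ j)
    _ ≤ condMap f c (f i) (f j) :=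
      Finset.single_le_sum (fun a _ => Finset.sum_nonneg fun b _ => term_nonneg a b)
        (Finset.mem_univ i)

lemma reachable_condMap (hc : ∀ i j, 0 ≤ c i j) (f : V → W) {x v : V}
    (hv : (supportGraph c).Reachable x v) :
    (supportGraph (condMap f c)).Reachable (f x) (f v) := by
  rw [SimpleGraph.reachable_iff_reflTransGen] at hv
  induction hv with
  | refl => exact .refl _
  | @tail a b _ hab ih =>
    refine ih.trans ?_
    by_cases hf : f a = f b
    · rw [hf]
    · have hpos := ((SimpleGraph.fromRel_adj _ _ _).mp hab).2
      exact ((SimpleGraph.fromRel_adj _ _ _).mpr ⟨hf, hpos.imp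
        (fun h => h.trans_le (le_condMap hc f a b))
        (fun h => h.trans_le (le_condMap hc f b a))⟩).reachable

lemma condMap_eq_zero {f : V → W} {a b : W} (h : a ∉ Set.range f ∨ b ∉ Set.range f) :
    condMap f c a b = 0 :=
  Finset.sum_eq_zero fun i _ => Finset.sum_eq_zero fun j _ => if_neg fun hij =>
    h.elim (· ⟨i, hij.1⟩) (· ⟨j, hij.2⟩)

lemma mem_range_of_reachable_condMap {f : V → W} {x : V} {w : W}
    (hw : (supportGraph (condMap f c)).Reachable (f x) w) : w ∈ Set.range f := by
  rw [SimpleGraph.reachable_iff_reflTransGen] at hw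
  obtain rfl | ⟨a, -, hadj⟩ := hw.cases_tail
  · exact Set.mem_range_self x
  · by_contra hmem
    obtain hpos | hpos := ((SimpleGraph.fromRel_adj _ _ _).mp hadj).2
    · exact hpos.ne' (condMap_eq_zero (.inr hmem))
    · exact hpos.ne' (condMap_eq_zero (.inl hmem))

lemma sum_condMap_mul [Fintype W] (f : V → W) (c : V → V → ℝ) (h : W → W → ℝ) :
    ∑ a, ∑ b, condMap f c a b * h a b = ∑ i, ∑ j, c i j * h (f i) (f j) := by
  let t : W × W → V × V → ℝ := fun p r =>
    if f r.1 = p.1 ∧ f r.2 = p.2 then c r.1 r.2 * h p.1 p.2 else 0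
  calc ∑ a, ∑ b, condMap f c a b * h a b
      = ∑ p, ∑ r, t p r := by
        simp only [condMap, t, Fintype.sum_prod_type, Finset.sum_mul, ite_mul, zero_mul]
    _ = ∑ r, ∑ p, t p r := Finset.sum_comm
    _ = ∑ i, ∑ j, c i j * h (f i) (f j) := by
        simp only [t, Fintype.sum_prod_type, ite_and, Finset.sum_ite_irrel, Finset.sum_const_zero,
          Finset.sum_ite_eq, Finset.mem_univ, if_true]

lemma gffEnergy_condMap [Fintype W] (f : V → W) (c : V → V → ℝ) (φ : W → ℤ) :
    gffEnergy (condMap f c) φ = gffEnergy c (φ ∘ f) :=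
  congrArg (1 / 2 * ·) (sum_condMap_mul f c fun a b => ((φ a - φ b : ℤ) : ℝ) ^ 2)

/-- Pulling a configuration on the graph with identified vertices back to a configuration on the
original graph, which takes equal values at identified vertices. -/
def gffConfigPullback (hconn : (supportGraph c).Connected) (f : V → W) (x : V) :
    gffConfigSubgroup (condMap f c) (f x) →+ gffConfigSubgroup c x where
  toFun φ := ⟨φ.1 ∘ f, φ.2.1, fun v hv => absurd (hconn.preconnected x v) hv⟩
  map_zero' := rfl
  map_add' _ _ := rfl

lemma gffConfigPullback_injective (hconn : (supportGraph c).Connected) (f : V → W) (x : V) :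
    Function.Injective (gffConfigPullback hconn f x) := by
  intro φ ψ h
  ext w
  by_cases hw : w ∈ Set.range f
  · obtain ⟨v, rfl⟩ := hw
    exact congrFun (congrArg Subtype.val h) v
  · have unreachable : ¬ (supportGraph (condMap f c)).Reachable (f x) w :=
      mt mem_range_of_reachable_condMap hw
    rw [φ.2.2 w unreachable, ψ.2.2 w unreachable]

theorem gffRVar_condMap_le [Fintype W] (hc : ∀ i j, 0 ≤ c i j)
    (hconn : (supportGraph c).Connected) (f : V → W) (x : V) (l : (V → ℤ) →+ ℝ) :
    gffRVar (condMap f c) (f x) (fun φ => l (φ ∘ f)) ≤ gffRVar c x l := by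
  let precomp : (W → ℤ) →+ (V → ℤ) := (LinearMap.funLeft ℤ ℤ f).toAddMonoidHom
  let q : gffConfigSubgroup c x → ℝ := fun φ => gffEnergy c φ
  let l' : gffConfigSubgroup c x →+ ℝ := l.comp (gffConfigSubgroup c x).subtype
  let pullback := gffConfigPullback hconn f x
  calc gffRVar (condMap f c) (f x) (l.comp precomp)
      = discreteGaussianSecondMoment (q ∘ pullback) (l' ∘ pullback) := by
        rw [gffRVar_eq_discreteGaussianSecondMoment]
        simp only [gffEnergy_condMap]
        rfl
    _ ≤ discreteGaussianSecondMoment q l' := by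
        refine discreteGaussianSecondMoment_comp_le (fun φ ψ => gffEnergy_add_add_sub c φ ψ)
          (gffConfigPullback_injective hconn f x) ?_
          (summable_addMonoidHom_mul_exp_neg_gffEnergy hc x l)
        simpa only [one_mul] using summable_exp_neg_mul_gffEnergy hc x one_pos
    _ = gffRVar c x l := (gffRVar_eq_discreteGaussianSecondMoment c x l).symm

end Identification

theorem gff_variance_monotone_vertex_identification_general
    {V W : Type*} [Fintype V] [Fintype W] [DecidableEq W] (x : V) (c : V → V → ℝ)
    (hnn : ∀ i j, 0 ≤ c i j) (hconn : (supportGraph c).Connected) (f : V → W) :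
    (∀ i : V, gffVar1 (condMap f c) (f x) (f i) ≤ gffVar1 c x i) ∧
      (∀ i j : V, gffVar2 (condMap f c) (f x) (f i) (f j) ≤ gffVar2 c x i j) := by
  let height (v : V) : (V → ℤ) →+ ℝ := (Int.castAddHom ℝ).comp (Pi.evalAddMonoidHom _ v)
  have reachable (v : V) : (supportGraph c).Reachable x v := hconn.preconnected x v
  have reachable_map (v : V) : (supportGraph (condMap f c)).Reachable (f x) (f v) :=
    reachable_condMap hnn f (reachable v)
  refine ⟨fun i => ?_, fun i j => ?_⟩
  · rw [gffVar1, gffVar1, if_pos (reachable_map i), if_pos (reachable i)]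
    exact ENNReal.ofReal_le_ofReal (gffRVar_condMap_le hnn hconn f x (height i))
  · rw [gffVar2, gffVar2, if_pos ⟨reachable_map i, reachable_map j⟩,
      if_pos ⟨reachable i, reachable j⟩]
    exact ENNReal.ofReal_le_ofReal (gffRVar_condMap_le hnn hconn f x (height i - height j))

/-- **Monotonicity under identification of vertices.**
Let `G = (V,E,x)` be a finite connected rooted graph with conductances `c ∈ (0,∞)^E`
(encoded as a symmetric nonnegative function whose support graph is connected), and let
`y, z ∈ V`. Identifying the vertices `y` and `z` decreases the variance of every height
`φ(i)` and of every height difference `φ(i) − φ(j)`. -/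
theorem gff_variance_monotone_vertex_identification
    {V : Type*} [Fintype V] [DecidableEq V] (x : V) (c : V → V → ℝ)
    (hsym : ∀ i j, c i j = c j i) (hnn : ∀ i j, 0 ≤ c i j)
    (hconn : (supportGraph c).Connected)
    (y z : V) :
    (∀ i : V,
        gffVar1 (mergeCond c y z) (mergeMap y z x) (mergeMap y z i) ≤ gffVar1 c x i) ∧
      (∀ i j : V,
        gffVar2 (mergeCond c y z) (mergeMap y z x) (mergeMap y z i) (mergeMap y z j)
          ≤ gffVar2 c x i j) :=
  gff_variance_monotone_vertex_identification_general x c hnn hconn (mergeMap y z)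
end

section
/- For every exponent q ∈ (0,2], there exists a Borel probability measure μ_q on (0,∞) such that for every real number x, e^{−|x|^q} = ∫_{(0,∞)} e^{−λx²} dμ_q(λ). That is, the power-law interaction x ↦ e^{−|x|^q} is a mixture of centred Gaussian densities. -/
open MeasureTheory

open Filter Set
open scoped NNReal Topology unitInterval

/-!
Write `a = q / 2 ∈ (0, 1]`; the claim is that `t ↦ exp (-tᵃ)` is the Laplace transform of a
probability measure on `(0, ∞)`, to be evaluated at `t = x²`. Substituting `s = e^{-l}` turns
Laplace transforms of probability measures on the compact half-line `[0, ∞]` into mixtures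
`t ↦ ∫ sᵗ dμ(s)` over `[0, 1]`. Such mixtures form a convex set closed under products and, since
the probability measures on `[0, 1]` form a compact space, under pointwise limits. Hence with `φ`
also `exp (-c (1 - φ)) = lim (1 - c/n + (c/n) φ)ⁿ` is a mixture, and after exhausting a σ-finite
measure `ν` by sets of finite measure, so is `exp (-∫ (1 - Xᵗ) dν)`. For `a < 1`, taking
`X v = exp (-v^{-1/a})` and `ν` a multiple of Lebesgue measure on `(0, ∞)`, the scaling
`X(v)ᵗ = X(v / tᵃ)` makes this exponent equal to `-tᵃ`. Finally, the limits of `exp (-tᵃ)` at `0`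
and `∞` show that the mixing measure does not charge `s = 0` and `s = 1`, i.e. `l = ∞` and `l = 0`.
-/

theorem continuous_coe_rpow (t : ℝ≥0) : Continuous fun s : I ↦ (s : ℝ) ^ (t : ℝ) :=
  continuous_subtype_val.rpow_const fun _ ↦ Or.inr t.2

theorem integrable_coe_rpow (μ : Measure I) [IsFiniteMeasure μ] (t : ℝ≥0) :
    Integrable (fun s : I ↦ (s : ℝ) ^ (t : ℝ)) μ :=
  (continuous_coe_rpow t).integrable_of_hasCompactSupport (.of_compactSpace _)

/-- The mixture `t ↦ ∫ sᵗ dμ(s)` of the powers `t ↦ sᵗ`, `s ∈ [0, 1]`. With `s = e^{-l}` it is the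
Laplace transform of a probability measure on `[0, ∞]`, except that its value at `t = 0` is `1`
even if `μ` charges `s = 0`, because `0 ^ 0 = 1`. -/
noncomputable def powerMixture (μ : ProbabilityMeasure I) (t : ℝ≥0) : ℝ :=
  ∫ s : I, (s : ℝ) ^ (t : ℝ) ∂(μ : Measure I)

/-- The functions that are mixtures of powers with base in `[0, 1]`. -/
def IsPowerMixture (φ : ℝ≥0 → ℝ) : Prop :=
  φ ∈ range powerMixture

theorem continuous_powerMixture : Continuous powerMixture :=
  continuous_pi fun t ↦ ProbabilityMeasure.continuous_integral_boundedContinuousFunction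
    (.mkOfCompact ⟨_, continuous_coe_rpow t⟩)

theorem isClosed_setOf_isPowerMixture : IsClosed {φ | IsPowerMixture φ} :=
  (isCompact_range continuous_powerMixture).isClosed

theorem convex_setOf_isPowerMixture : Convex ℝ {φ | IsPowerMixture φ} := by
  rintro _ ⟨μ, rfl⟩ _ ⟨ν, rfl⟩ a b ha hb hab
  lift a to ℝ≥0 using ha
  lift b to ℝ≥0 using hb
  have isProbabilityMeasure_mix :
      IsProbabilityMeasure (a • (μ : Measure I) + b • (ν : Measure I)) := by
    constructor
    rw [Measure.add_apply, Measure.smul_apply, Measure.smul_apply, measure_univ, measure_univ,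
      ← add_smul, show a + b = 1 by exact_mod_cast hab, one_smul]
  refine ⟨⟨_, isProbabilityMeasure_mix⟩, funext fun t ↦ ?_⟩
  refine (integral_add_measure (integrable_coe_rpow _ t) (integrable_coe_rpow _ t)).trans ?_
  simp only [integral_smul_nnreal_measure]
  rfl

namespace IsPowerMixture

variable {Ω : Type*} [MeasurableSpace Ω] {X : Ω → I} {φ ψ : ℝ≥0 → ℝ}

theorem integral_rpow (P : Measure Ω) [IsProbabilityMeasure P] (hX : Measurable X) :
    IsPowerMixture fun t ↦ ∫ ω, (X ω : ℝ) ^ (t : ℝ) ∂P := by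
  refine ⟨⟨P.map X, Measure.isProbabilityMeasure_map hX.aemeasurable⟩, funext fun t ↦ ?_⟩
  exact integral_map hX.aemeasurable (continuous_coe_rpow t).aestronglyMeasurable

theorem rpow (s : I) : IsPowerMixture fun t ↦ (s : ℝ) ^ (t : ℝ) := by
  simpa using integral_rpow (.dirac ()) (measurable_const (a := s))

theorem one : IsPowerMixture 1 := by
  convert rpow 1 with t
  simp

theorem mul (hφ : IsPowerMixture φ) (hψ : IsPowerMixture ψ) : IsPowerMixture (φ * ψ) := by
  obtain ⟨μ, rfl⟩ := hφ
  obtain ⟨ν, rfl⟩ := hψ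
  convert integral_rpow ((μ : Measure I).prod ν) measurable_mul with t
  simp only [Icc.coe_mul, Real.mul_rpow (unitInterval.nonneg _) (unitInterval.nonneg _)]
  exact (integral_prod_mul (fun s : I ↦ (s : ℝ) ^ (t : ℝ)) fun s : I ↦ (s : ℝ) ^ (t : ℝ)).symm

theorem pow (hφ : IsPowerMixture φ) (n : ℕ) : IsPowerMixture (φ ^ n) := by
  induction n with
  | zero => simpa using one
  | succ n ih => simpa only [pow_succ] using ih.mul hφ

theorem exp_neg_mul_one_sub (hφ : IsPowerMixture φ) {c : ℝ} (hc : 0 ≤ c) :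
    IsPowerMixture fun t ↦ Real.exp (-(c * (1 - φ t))) := by
  have tendsto_one_add_div_pow :
      Tendsto (fun (n : ℕ) t ↦ (1 + -(c * (1 - φ t)) / n) ^ n) atTop
        (𝓝 fun t ↦ Real.exp (-(c * (1 - φ t)))) :=
    tendsto_pi_nhds.2 fun t ↦ Real.tendsto_one_add_div_pow_exp _
  refine isClosed_setOf_isPowerMixture.mem_of_tendsto tendsto_one_add_div_pow ?_
  filter_upwards [eventually_ge_atTop ⌈c⌉₊] with n hn
  have div_le_one : c / n ≤ 1 := div_le_one_of_le₀ (Nat.ceil_le.1 hn) n.cast_nonneg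
  have convex_combination : IsPowerMixture ((1 - c / n) • 1 + (c / n) • φ) :=
    convex_setOf_isPowerMixture one hφ (sub_nonneg.2 div_le_one) (by positivity)
      (sub_add_cancel _ _)
  convert convex_combination.pow n using 1
  ext t
  simp only [Pi.pow_apply, Pi.add_apply, Pi.smul_apply, Pi.one_apply, smul_eq_mul]
  ring

theorem exp_neg_integral_of_isFiniteMeasure (ν : Measure Ω) [IsFiniteMeasure ν]
    (hX : Measurable X) :
    IsPowerMixture fun t ↦ Real.exp (-∫ ω, (1 - (X ω : ℝ) ^ (t : ℝ)) ∂ν) := by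
  rcases eq_zero_or_neZero ν with rfl | _
  · simpa using! one
  convert (integral_rpow ((ν univ)⁻¹ • ν) hX).exp_neg_mul_one_sub (c := ν.real univ)
    measureReal_nonneg with t
  have integrable_rpow : Integrable (fun ω ↦ (X ω : ℝ) ^ (t : ℝ)) ν :=
    (integrable_coe_rpow (ν.map X) t).comp_measurable hX
  rw [integral_sub (integrable_const 1) integrable_rpow, integral_const, smul_eq_mul, mul_one,
    ← measure_smul_average, smul_eq_mul, mul_one_sub, average]

theorem exp_neg_integral (ν : Measure Ω) [SigmaFinite ν] (hX : Measurable X)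
    (hint : ∀ t : ℝ≥0, Integrable (fun ω ↦ 1 - (X ω : ℝ) ^ (t : ℝ)) ν) :
    IsPowerMixture fun t ↦ Real.exp (-∫ ω, (1 - (X ω : ℝ) ^ (t : ℝ)) ∂ν) := by
  have tendsto_integral_spanningSets (t : ℝ≥0) :
      Tendsto (fun n ↦ ∫ ω in spanningSets ν n, (1 - (X ω : ℝ) ^ (t : ℝ)) ∂ν) atTop
        (𝓝 (∫ ω, (1 - (X ω : ℝ) ^ (t : ℝ)) ∂ν)) := by
    simpa [iUnion_spanningSets] using tendsto_setIntegral_of_monotone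
      (measurableSet_spanningSets ν) (monotone_spanningSets ν) (hint t).integrableOn
  refine isClosed_setOf_isPowerMixture.mem_of_tendsto
    (tendsto_pi_nhds.2 fun t ↦
      (Real.continuous_exp.tendsto _).comp (tendsto_integral_spanningSets t).neg)
    (.of_forall fun n ↦ ?_)
  have : IsFiniteMeasure (ν.restrict (spanningSets ν n)) :=
    ⟨by simpa using measure_spanningSets_lt_top ν n⟩
  exact exp_neg_integral_of_isFiniteMeasure _ hX

end IsPowerMixture

section StableExponent

variable {a p t v : ℝ}

theorem integrableOn_one_sub_exp_neg_rpow (hp : p < -1) :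
    IntegrableOn (fun v : ℝ ↦ 1 - Real.exp (-v ^ p)) (Ioi 0) := by
  have hmeas : Measurable fun v : ℝ ↦ 1 - Real.exp (-v ^ p) := by fun_prop
  have norm_eq {v : ℝ} (hv : 0 < v) : ‖1 - Real.exp (-v ^ p)‖ = 1 - Real.exp (-v ^ p) :=
    Real.norm_of_nonneg (sub_nonneg.2 (Real.exp_le_one_iff.2 (neg_nonpos.2 (by positivity))))
  rw [← Ioc_union_Ioi_eq_Ioi zero_le_one]
  refine .union ?_ ?_
  · refine Measure.integrableOn_of_bounded (M := 1) (by simp) hmeas.aestronglyMeasurable ?_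
    filter_upwards [ae_restrict_mem measurableSet_Ioc] with v hv
    exact (norm_eq hv.1).trans_le (sub_le_self _ (Real.exp_nonneg _))
  · refine (integrableOn_Ioi_rpow_of_lt hp one_pos).mono' hmeas.aestronglyMeasurable ?_
    filter_upwards [ae_restrict_mem measurableSet_Ioi] with v hv
    rw [norm_eq (one_pos.trans hv)]
    linarith [Real.one_sub_le_exp_neg (v ^ p)]

theorem integral_one_sub_exp_neg_rpow_pos (hp : p < -1) :
    0 < ∫ v in Ioi (0 : ℝ), (1 - Real.exp (-v ^ p)) := by
  have integrand_pos {v : ℝ} (hv : v ∈ Ioi 0) : 0 < 1 - Real.exp (-v ^ p) :=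
    sub_pos.2 (Real.exp_lt_one_iff.2 (neg_lt_zero.2 (Real.rpow_pos_of_pos hv p)))
  rw [setIntegral_pos_iff_support_of_nonneg_ae
    ((ae_restrict_mem measurableSet_Ioi).mono fun v hv ↦ (integrand_pos hv).le)
    (integrableOn_one_sub_exp_neg_rpow hp),
    inter_eq_right.2 fun v hv ↦ Function.mem_support.2 (integrand_pos hv).ne']
  simp

theorem exp_neg_rpow_neg_inv_rpow (ha : a ≠ 0) (ht : 0 < t) (hv : 0 < v) :
    Real.exp (-v ^ (-a⁻¹)) ^ t = Real.exp (-((t ^ a)⁻¹ * v) ^ (-a⁻¹)) := by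
  rw [← Real.exp_mul, Real.mul_rpow (by positivity) hv.le, Real.inv_rpow (by positivity),
    ← Real.rpow_mul ht.le, mul_neg, mul_inv_cancel₀ ha, Real.rpow_neg_one, inv_inv, neg_mul,
    mul_comm]

theorem integrableOn_one_sub_exp_neg_rpow_neg_inv_rpow (ha₀ : 0 < a) (ha₁ : a < 1) (ht : 0 ≤ t) :
    IntegrableOn (fun v : ℝ ↦ 1 - Real.exp (-v ^ (-a⁻¹)) ^ t) (Ioi 0) := by
  rcases ht.eq_or_lt with rfl | ht
  · simp
  have scaled : IntegrableOn (fun v ↦ 1 - Real.exp (-((t ^ a)⁻¹ * v) ^ (-a⁻¹))) (Ioi 0) := by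
    refine (integrableOn_Ioi_comp_mul_left_iff (fun v ↦ 1 - Real.exp (-v ^ (-a⁻¹))) 0
      (by positivity)).2 ?_
    simpa using integrableOn_one_sub_exp_neg_rpow (neg_lt_neg ((one_lt_inv₀ ha₀).2 ha₁))
  refine scaled.congr_fun (fun v hv ↦ ?_) measurableSet_Ioi
  simp only [exp_neg_rpow_neg_inv_rpow ha₀.ne' ht hv]

theorem integral_one_sub_exp_neg_rpow_neg_inv_rpow (ha : a ≠ 0) (ht : 0 ≤ t) :
    ∫ v in Ioi (0 : ℝ), (1 - Real.exp (-v ^ (-a⁻¹)) ^ t) =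
      t ^ a * ∫ v in Ioi (0 : ℝ), (1 - Real.exp (-v ^ (-a⁻¹))) := by
  rcases ht.eq_or_lt with rfl | ht
  · simp [Real.zero_rpow ha]
  calc ∫ v in Ioi (0 : ℝ), (1 - Real.exp (-v ^ (-a⁻¹)) ^ t)
    _ = ∫ v in Ioi (0 : ℝ), (1 - Real.exp (-((t ^ a)⁻¹ * v) ^ (-a⁻¹))) :=
      setIntegral_congr_fun measurableSet_Ioi fun v hv ↦ by
        simp only [exp_neg_rpow_neg_inv_rpow ha ht hv]
    _ = t ^ a * ∫ v in Ioi (0 : ℝ), (1 - Real.exp (-v ^ (-a⁻¹))) := by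
      rw [integral_comp_mul_left_Ioi (fun v ↦ 1 - Real.exp (-v ^ (-a⁻¹))) 0 (by positivity)]
      simp

namespace IsPowerMixture

theorem exp_neg_rpow_of_lt_one (ha₀ : 0 < a) (ha₁ : a < 1) :
    IsPowerMixture fun t ↦ Real.exp (-(t : ℝ) ^ a) := by
  let X (v : ℝ) : I :=
    ⟨Real.exp (-|v| ^ (-a⁻¹)), by positivity, Real.exp_le_one_iff.2 (neg_nonpos.2 (by positivity))⟩
  have hX : Measurable X := .subtype_mk (by fun_prop)
  have eqOn_X (t : ℝ≥0) : EqOn (fun v ↦ 1 - Real.exp (-v ^ (-a⁻¹)) ^ (t : ℝ))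
      (fun v ↦ 1 - (X v : ℝ) ^ (t : ℝ)) (Ioi 0) := fun v hv ↦ by
    simp only [X, abs_of_pos (mem_Ioi.1 hv)]
  obtain ⟨C, hC⟩ : ∃ C, C = ∫ v in Ioi (0 : ℝ), (1 - Real.exp (-v ^ (-a⁻¹))) := ⟨_, rfl⟩
  have C_pos : 0 < C :=
    hC ▸ integral_one_sub_exp_neg_rpow_pos (neg_lt_neg ((one_lt_inv₀ ha₀).2 ha₁))
  convert exp_neg_integral (C⁻¹.toNNReal • volume.restrict (Ioi 0)) hX fun t ↦
    ((integrableOn_one_sub_exp_neg_rpow_neg_inv_rpow ha₀ ha₁ t.coe_nonneg).congr_fun (eqOn_X t)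
      measurableSet_Ioi).smul_measure_nnreal with t
  rw [integral_smul_nnreal_measure, ← setIntegral_congr_fun measurableSet_Ioi (eqOn_X t),
    integral_one_sub_exp_neg_rpow_neg_inv_rpow ha₀.ne' t.coe_nonneg, ← hC, NNReal.smul_def,
    Real.coe_toNNReal _ (by positivity), smul_eq_mul]
  field_simp

theorem exp_neg_rpow (ha₀ : 0 < a) (ha₁ : a ≤ 1) :
    IsPowerMixture fun t ↦ Real.exp (-(t : ℝ) ^ a) := by
  rcases ha₁.eq_or_lt with rfl | ha₁
  · convert rpow ⟨Real.exp (-1), by positivity, by simp⟩ with t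
    simp [← Real.exp_mul]
  · exact exp_neg_rpow_of_lt_one ha₀ ha₁

end IsPowerMixture

end StableExponent

section LaplaceTransform

variable {μ : ProbabilityMeasure I}

theorem measureReal_singleton_one_le_powerMixture (t : ℝ≥0) :
    (μ : Measure I).real {1} ≤ powerMixture μ t := by
  calc (μ : Measure I).real {1}
    _ = ∫ s in {(1 : I)}, (s : ℝ) ^ (t : ℝ) ∂(μ : Measure I) := by
      rw [integral_singleton]
      simp
    _ ≤ powerMixture μ t :=
      setIntegral_le_integral (integrable_coe_rpow _ t)
        (.of_forall fun s ↦ Real.rpow_nonneg s.2.1 t)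

theorem measureReal_singleton_zero_le_one_sub_powerMixture {t : ℝ≥0} (ht : t ≠ 0) :
    (μ : Measure I).real {0} ≤ 1 - powerMixture μ t := by
  calc (μ : Measure I).real {0}
    _ = ∫ s in {(0 : I)}, (1 - (s : ℝ) ^ (t : ℝ)) ∂(μ : Measure I) := by
      rw [integral_singleton]
      simp [ht]
    _ ≤ ∫ s : I, (1 - (s : ℝ) ^ (t : ℝ)) ∂(μ : Measure I) :=
      setIntegral_le_integral ((integrable_const 1).sub (integrable_coe_rpow _ t))
        (.of_forall fun s ↦ sub_nonneg.2 (Real.rpow_le_one s.2.1 s.2.2 t.2))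
    _ = 1 - powerMixture μ t := by
      rw [integral_sub (integrable_const 1) (integrable_coe_rpow _ t)]
      simp [powerMixture]

theorem measure_singleton_one_eq_zero_of_tendsto
    (h : Tendsto (powerMixture μ) atTop (𝓝 0)) : (μ : Measure I) {1} = 0 := by
  refine (measureReal_eq_zero_iff).1 (le_antisymm ?_ measureReal_nonneg)
  exact ge_of_tendsto' h measureReal_singleton_one_le_powerMixture

theorem measure_singleton_zero_eq_zero_of_tendsto
    (h : Tendsto (powerMixture μ) (𝓝[≠] 0) (𝓝 1)) : (μ : Measure I) {0} = 0 := by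
  refine (measureReal_eq_zero_iff).1 (le_antisymm ?_ measureReal_nonneg)
  refine ge_of_tendsto (by simpa using h.const_sub 1) ?_
  filter_upwards [self_mem_nhdsWithin] with t ht
  exact measureReal_singleton_zero_le_one_sub_powerMixture ht

theorem IsPowerMixture.exists_eq_integral_exp_neg {φ : ℝ≥0 → ℝ} (hφ : IsPowerMixture φ)
    (hφ_zero : Tendsto φ (𝓝[≠] 0) (𝓝 1)) (hφ_top : Tendsto φ atTop (𝓝 0)) :
    ∃ μ : Measure ℝ, IsProbabilityMeasure μ ∧ μ {l : ℝ | l ≤ 0} = 0 ∧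
      ∀ t : ℝ≥0, φ t = ∫ l, Real.exp (-(l * t)) ∂μ := by
  obtain ⟨μ, rfl⟩ := hφ
  have measure_zero : (μ : Measure I) {0} = 0 := measure_singleton_zero_eq_zero_of_tendsto hφ_zero
  have measure_one : (μ : Measure I) {1} = 0 := measure_singleton_one_eq_zero_of_tendsto hφ_top
  have hlog : Measurable fun s : I ↦ -Real.log s := by fun_prop
  -- Since `Real.log 0 = 0`, the point `s = 0`, which stands for `l = ∞`, is sent to `l = 0`.
  refine ⟨(μ : Measure I).map fun s : I ↦ -Real.log s,
    Measure.isProbabilityMeasure_map hlog.aemeasurable, ?_, fun t ↦ ?_⟩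
  · rw [Measure.map_apply hlog (s := {l | l ≤ 0}) measurableSet_Iic]
    refine measure_mono_null (fun s hs ↦ ?_) (measure_union_null measure_zero measure_one)
    have log_nonneg : 0 ≤ Real.log s := by simpa using hs
    rcases eq_or_ne s 0 with rfl | hs₀
    · exact Or.inl rfl
    · have one_le : (1 : ℝ) ≤ s :=
        (Real.log_nonneg_iff (unitInterval.pos_iff_ne_zero.2 hs₀)).1 log_nonneg
      exact Or.inr (Subtype.ext (le_antisymm s.2.2 one_le))
  · rw [integral_map hlog.aemeasurable (Measurable.aestronglyMeasurable (by fun_prop))]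
    refine integral_congr_ae ?_
    filter_upwards [compl_mem_ae_iff.2 measure_zero] with s hs
    rw [Real.rpow_def_of_pos (unitInterval.pos_iff_ne_zero.2 hs), neg_mul, neg_neg]

end LaplaceTransform

theorem tendsto_exp_neg_rpow_nhdsNE_zero {a : ℝ} (ha : 0 < a) :
    Tendsto (fun t : ℝ≥0 ↦ Real.exp (-(t : ℝ) ^ a)) (𝓝[≠] 0) (𝓝 1) := by
  have hcont : Continuous fun t : ℝ≥0 ↦ Real.exp (-(t : ℝ) ^ a) := by
    fun_prop (disch := exact ha.le)
  simpa [Real.zero_rpow ha.ne'] using (hcont.tendsto 0).mono_left nhdsWithin_le_nhds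

theorem tendsto_exp_neg_rpow_atTop {a : ℝ} (ha : 0 < a) :
    Tendsto (fun t : ℝ≥0 ↦ Real.exp (-(t : ℝ) ^ a)) atTop (𝓝 0) :=
  Real.tendsto_exp_neg_atTop_nhds_zero.comp
    ((tendsto_rpow_atTop ha).comp (NNReal.tendsto_coe_atTop.2 tendsto_id))

/-- **Gaussian decomposition of power-law interactions.**
For every exponent `q ∈ (0,2]` there exists a Borel probability measure `μ_q` on `(0,∞)`
(encoded as a probability measure on `ℝ` giving zero mass to `(−∞,0]`) such that for
every real `x`, `e^{−|x|^q} = ∫_{(0,∞)} e^{−λx²} dμ_q(λ)`. -/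
theorem gaussian_decomposition_of_power_law
    (q : ℝ) (hq₀ : 0 < q) (hq₂ : q ≤ 2) :
    ∃ μ : Measure ℝ, IsProbabilityMeasure μ ∧ μ {l : ℝ | l ≤ 0} = 0 ∧
      ∀ x : ℝ, Real.exp (-(|x| ^ q)) = ∫ l, Real.exp (-(l * x ^ 2)) ∂μ := by
  have ha₀ : 0 < q / 2 := half_pos hq₀
  have ha₁ : q / 2 ≤ 1 := by linarith
  obtain ⟨μ, hμ, hμ_pos, hμ_eq⟩ := (IsPowerMixture.exp_neg_rpow ha₀ ha₁).exists_eq_integral_exp_neg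
    (tendsto_exp_neg_rpow_nhdsNE_zero ha₀) (tendsto_exp_neg_rpow_atTop ha₀)
  refine ⟨μ, hμ, hμ_pos, fun x ↦ ?_⟩
  have abs_rpow_eq : |x| ^ q = (x ^ 2) ^ (q / 2) := by
    rw [← sq_abs, ← Real.rpow_natCast_mul (abs_nonneg x), Nat.cast_ofNat,
      mul_div_cancel₀ q two_ne_zero]
  rw [abs_rpow_eq]
  exact hμ_eq ⟨x ^ 2, sq_nonneg x⟩
end
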